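/- Let α, β ∈ ℂ with α, β ∉ {1, 3, 5, …}. If α + β = 2 − n, then M^α M^β = I, the identity operator, on the space D_e(S^{n-1}) of even C^∞ functions (equivalently, m_{j,α} m_{j,β} = 1 for all even j). -/

import Mathlib

/-!
STATEMENT 2: Let α, β ∈ ℂ with α, β ∉ {1, 3, 5, …}. If α + β = 2 − n, then
M^α M^β = I on the space D_e(S^{n-1}) of even C^∞ functions (equivalently,
m_{j,α} m_{j,β} = 1 for all even j).

The analytically continued generalized cosine transforms M^α are modeled by a
`CosineFamily`: a family of operators given by the defining integral for Re α > 0 and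
analytic in α off {1,3,5,…}; these properties determine the family uniquely on smooth
functions.
-/

open MeasureTheory Metric Complex
open scoped RealInnerProductSpace

noncomputable section

/-- Euclidean space `ℝ^n`. -/
abbrev Euc (n : ℕ) := EuclideanSpace ℝ (Fin n)

/-- The unit sphere `S^{n-1} ⊂ ℝ^n`. -/
abbrev Sph (n : ℕ) := Metric.sphere (0 : Euc n) 1

/-- The rotation-invariant surface measure on the unit sphere `S^{n-1}`;
the normalized measure `dθ` is its normalization `⨍ … ∂(sphMeasure n)`. -/
def sphMeasure (n : ℕ) : Measure (Sph n) := (volume : Measure (Euc n)).toSphere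

/-- A function on the sphere is (infinitely) smooth if it extends to a `C^∞`
function on the ambient space; this realizes the space `D(S^{n-1})` of test functions. -/
def SmoothSph {n : ℕ} {V : Type*} [NormedAddCommGroup V] [NormedSpace ℝ V]
    (f : Sph n → V) : Prop :=
  ∃ F : Euc n → V, ContDiff ℝ (⊤ : ℕ∞) F ∧ ∀ x : Sph n, f x = F x

/-- An even function on the sphere. -/
def EvenSph {n : ℕ} {V : Type*} (f : Sph n → V) : Prop := ∀ x : Sph n, f (-x) = f x

/-- `σ_k`, the surface area of the sphere `S^k`:  `2 π^{(k+1)/2} / Γ((k+1)/2)`. -/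
def sigmaS (k : ℕ) : ℝ := 2 * Real.pi ^ (((k : ℝ) + 1) / 2) / Real.Gamma (((k : ℝ) + 1) / 2)

/-- `α ∈ {1, 3, 5, …}`. -/
def IsPosOdd (α : ℂ) : Prop := ∃ k : ℕ, α = 2 * k + 1

/-- The normalizing constant `γ_n(α) = σ_{n-1} Γ((1-α)/2) / (2 π^{(n-1)/2} Γ(α/2))`. -/
def gammaM (n : ℕ) (α : ℂ) : ℂ :=
  (sigmaS (n - 1) : ℝ) * Complex.Gamma ((1 - α) / 2) /
    (2 * (Real.pi : ℂ) ^ (((n : ℂ) - 1) / 2) * Complex.Gamma (α / 2))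

/-- The generalized cosine transform `(M^α f)(u) = γ_n(α) ∫_{S^{n-1}} f(θ)|θ·u|^{α-1} dθ`
(concrete integral, absolutely convergent for `Re α > 0`); `dθ` is the normalized
rotation-invariant measure on `S^{n-1}`. -/
def cosT (n : ℕ) (α : ℂ) (f : Sph n → ℂ) (u : Sph n) : ℂ :=
  gammaM n α *
    ⨍ θ : Sph n, f θ * ((|⟪(θ : Euc n), (u : Euc n)⟫| : ℝ) : ℂ) ^ (α - 1) ∂(sphMeasure n)

/-- An analytic family realizing the generalized cosine transforms `M^α`
(including the analytic continuation to all `α ∉ {1,3,5,…}`):  the family is linear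
in `f`, maps smooth functions to smooth even functions, is given by the concrete
integral `cosT` whenever `Re α > 0`, and for each smooth `f` and each point `u` it
is analytic in `α` on `ℂ ∖ {1,3,5,…}`.  These properties determine the operators
`M^α` uniquely on smooth functions. -/
structure CosineFamily (n : ℕ) where
  M : ℂ → (Sph n → ℂ) → Sph n → ℂ
  linear : ∀ α, IsLinearMap ℂ (M α)
  smooth : ∀ {α : ℂ}, ¬ IsPosOdd α → ∀ {f : Sph n → ℂ}, SmoothSph f → SmoothSph (M α f)
  even : ∀ {α : ℂ}, ¬ IsPosOdd α → ∀ {f : Sph n → ℂ}, SmoothSph f → EvenSph (M α f)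
  formula : ∀ {α : ℂ}, 0 < α.re → ¬ IsPosOdd α → ∀ {f : Sph n → ℂ}, SmoothSph f →
    ∀ u, M α f u = cosT n α f u
  analytic : ∀ {f : Sph n → ℂ}, SmoothSph f → ∀ u,
    DifferentiableOn ℂ (fun α => M α f u) {α | ¬ IsPosOdd α}

/-- The Fourier–Laplace multiplier of `M^α`:
`m_{j,α} = (-1)^{j/2} Γ(j/2 + (1-α)/2) / Γ(j/2 + (n-1+α)/2)` (for even `j`). -/
def multM (n : ℕ) (j : ℕ) (α : ℂ) : ℂ :=
  (-1) ^ (j / 2) * Complex.Gamma ((j : ℂ) / 2 + (1 - α) / 2) /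
    Complex.Gamma ((j : ℂ) / 2 + ((n : ℂ) - 1 + α) / 2)

def domU : Set ℂ := {α | ¬ IsPosOdd α}

lemma oddset_eq : domU = (Set.range (fun k : ℕ => (2 * k + 1 : ℂ)))ᶜ := by
  ext α
  simp [domU, IsPosOdd, eq_comm]

lemma domU_open : IsOpen domU := by
  rw [oddset_eq, isOpen_compl_iff]
  have h : (fun k : ℕ => (2 * k + 1 : ℂ)) = (fun z : ℤ => (z : ℂ)) ∘ (fun k : ℕ => (2 * (k : ℤ) + 1)) := by
    ext k; simp
  rw [h, Set.range_comp]
  exact Complex.isClosedEmbedding_intCast.isClosedMap _ (isClosed_discrete _)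

lemma domU_pathConn : IsPathConnected domU := by
  rw [oddset_eq]
  apply Set.Countable.isPathConnected_compl_of_one_lt_rank
  · rw [Complex.rank_real_complex]; norm_num
  · exact Set.countable_range _

lemma notOdd_of_real {a : ℝ} (h1 : 1 < a) (h3 : a < 3) : (a : ℂ) ∈ domU := by
  rintro ⟨k, hk⟩
  have hk' : a = 2 * k + 1 := by exact_mod_cast hk
  rcases k with _ | k
  · simp at hk'; linarith
  · push_cast at hk'
    have : (0 : ℝ) ≤ k := Nat.cast_nonneg k
    linarith

lemma two_mem : (2 : ℂ) ∈ domU := by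
  have := notOdd_of_real (a := 2) (by norm_num) (by norm_num)
  simpa using this

/-- Identity theorem: agreement on real points of `(1,3)` suffices. -/
lemma identW {W : Set ℂ} (hW : IsOpen W) (hc : IsPreconnected W) (h2 : (2 : ℂ) ∈ W)
    {f g : ℂ → ℂ} (hf : DifferentiableOn ℂ f W) (hg : DifferentiableOn ℂ g W)
    (h : ∀ a : ℝ, 1 < a → a < 3 → (a : ℂ) ∈ W → f a = g a) : Set.EqOn f g W := by
  apply (hf.analyticOnNhd hW).eqOn_of_preconnected_of_frequently_eq (hg.analyticOnNhd hW) hc h2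
  have ht : Filter.Tendsto (fun x : ℝ => (x : ℂ)) (nhdsWithin 2 {2}ᶜ) (nhdsWithin 2 {2}ᶜ) := by
    apply tendsto_nhdsWithin_of_tendsto_nhds_of_eventually_within
    · have : Filter.Tendsto (fun x : ℝ => (x : ℂ)) (nhds 2) (nhds ((2 : ℝ) : ℂ)) :=
        Complex.continuous_ofReal.tendsto 2
      simpa using this.mono_left nhdsWithin_le_nhds
    · filter_upwards [self_mem_nhdsWithin] with x hx
      simp only [Set.mem_compl_iff, Set.mem_singleton_iff] at hx ⊢
      exact_mod_cast hx
  apply ht.frequently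
  apply Filter.Eventually.frequently
  have hW' : ∀ᶠ x : ℝ in nhdsWithin 2 {2}ᶜ, (x : ℂ) ∈ W :=
    (ht.mono_right nhdsWithin_le_nhds).eventually (hW.mem_nhds h2)
  have h1 : ∀ᶠ x : ℝ in nhdsWithin 2 {2}ᶜ, x ∈ Set.Ioo (1 : ℝ) 3 :=
    nhdsWithin_le_nhds (Ioo_mem_nhds (by norm_num) (by norm_num))
  filter_upwards [hW', h1] with x hx hx1
  exact h x hx1.1 hx1.2 hx

lemma identU {f g : ℂ → ℂ} (hf : DifferentiableOn ℂ f domU) (hg : DifferentiableOn ℂ g domU)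
    (h : ∀ a : ℝ, 1 < a → a < 3 → f a = g a) : Set.EqOn f g domU :=
  identW domU_open domU_pathConn.isConnected.isPreconnected two_mem hf hg
    (fun a h1 h3 _ => h a h1 h3)

/-- Given `α₀` in the domain there is a good bounded connected open set. -/
lemma exists_W {α₀ : ℂ} (hα : α₀ ∈ domU) : ∃ W K : Set ℂ, IsOpen W ∧ IsPreconnected W ∧
    (2 : ℂ) ∈ W ∧ α₀ ∈ W ∧ IsCompact K ∧ W ⊆ K ∧ K ⊆ domU := by
  obtain ⟨γ, hγ⟩ := domU_pathConn.joinedIn α₀ hα 2 two_mem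
  have hcomp : IsCompact (Set.range γ) := isCompact_range γ.continuous
  have hsub : Set.range γ ⊆ domU := by rintro _ ⟨t, rfl⟩; exact hγ t
  obtain ⟨δ, hδ, hδ'⟩ := hcomp.exists_cthickening_subset_open domU_open hsub
  have hconn : IsPreconnected (Set.range γ) := isPreconnected_range γ.continuous
  have hself := Metric.self_subset_thickening hδ (Set.range γ)
  refine ⟨Metric.thickening δ (Set.range γ), Metric.cthickening δ (Set.range γ),
    Metric.isOpen_thickening, ?_, hself ⟨1, by simp⟩, hself ⟨0, by simp⟩,
    hcomp.cthickening, Metric.thickening_subset_cthickening _ _, hδ'⟩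
  rw [Metric.thickening_eq_biUnion_ball]
  have : (⋃ x ∈ Set.range γ, Metric.ball x δ)
      = (fun p : ℂ × ℂ => p.1 + p.2) '' (Set.range γ ×ˢ Metric.ball (0:ℂ) δ) := by
    ext z
    simp only [Set.mem_iUnion, Set.mem_image, Set.mem_prod, exists_prop, Metric.mem_ball, Prod.exists]
    constructor
    · rintro ⟨x, hx, hz⟩
      exact ⟨x, z - x, ⟨hx, by simpa [dist_eq_norm] using hz⟩, by ring⟩
    · rintro ⟨x, y, ⟨hx, hy⟩, rfl⟩
      exact ⟨x, hx, by simpa [dist_eq_norm] using hy⟩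
  rw [this]
  exact (hconn.prod (convex_ball (0:ℂ) δ).isPreconnected).image _ continuous_add.continuousOn

/-- Vandermonde type identity. -/
def rhoP (x b : ℝ) (i : ℕ) : ℝ := (ascPochhammer ℝ i).eval (x + b) / (ascPochhammer ℝ i).eval x
def sigP (x b : ℝ) (l : ℕ) : ℝ :=
  (-1) ^ l * (ascPochhammer ℝ l).eval (-b) / (ascPochhammer ℝ l).eval x

lemma asc_left (l : ℕ) (x : ℝ) :
    (ascPochhammer ℝ (l + 1)).eval x = x * (ascPochhammer ℝ l).eval (x + 1) := by
  rw [ascPochhammer_succ_left]; simp [Polynomial.eval_comp]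

lemma asc_right (l : ℕ) (x : ℝ) :
    (ascPochhammer ℝ (l + 1)).eval x = (ascPochhammer ℝ l).eval x * (x + l) := by
  rw [ascPochhammer_succ_right]; simp

lemma asc_pos (l : ℕ) {x : ℝ} (hx : 0 < x) : 0 < (ascPochhammer ℝ l).eval x :=
  ascPochhammer_pos l x hx

lemma rho_eq (i : ℕ) : ∀ (x b : ℝ), 0 < x →
    rhoP x b i = ∑ l ∈ Finset.range (i + 1), (i.choose l : ℝ) * sigP x b l := by
  induction i with
  | zero => intro x b hx; simp [rhoP, sigP]
  | succ i ih =>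
    intro x b hx
    have h1 : rhoP x b (i + 1) = rhoP x b i + b / x * rhoP (x + 1) (b - 1) i := by
      have p1 := (asc_pos i hx).ne'
      have p2 := (asc_pos i (x := x + 1) (by linarith)).ne'
      have p3 : x + i ≠ 0 := by positivity
      have e := asc_left i x
      rw [asc_right] at e
      have e2 : (ascPochhammer ℝ i).eval (x + 1) = (ascPochhammer ℝ i).eval x * (x + i) / x := by
        field_simp; linarith
      unfold rhoP
      rw [asc_right, asc_right, show x + 1 + (b - 1) = x + b by ring, e2]
      field_simp
      ring
    have h2 : ∀ l, b / x * sigP (x + 1) (b - 1) l = sigP x b (l + 1) := by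
      intro l
      unfold sigP
      rw [asc_left, asc_left, show -b + 1 = -(b - 1) by ring]
      have p2 := (asc_pos l (x := x + 1) (by linarith)).ne'
      field_simp
      ring
    rw [h1, ih x b hx, ih (x + 1) (b - 1) (by linarith), Finset.mul_sum]
    have h3 : ∀ l, b / x * ((i.choose l : ℝ) * sigP (x + 1) (b - 1) l)
        = (i.choose l : ℝ) * sigP x b (l + 1) := by
      intro l; rw [← h2]; ring
    simp_rw [h3]
    rw [Finset.sum_range_succ' _ (i + 1)]
    simp_rw [Nat.choose_succ_succ, Nat.cast_add, add_mul, Finset.sum_add_distrib]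
    rw [Finset.sum_range_succ' (fun l => (i.choose l : ℝ) * sigP x b l) i,
      Finset.sum_range_succ (fun l => (i.choose (l + 1) : ℝ) * sigP x b (l + 1)) i]
    simp
    ring

lemma bern (k : ℕ) (σ : ℕ → ℝ) (s : ℝ) :
    ∑ i ∈ Finset.range (k + 1), (k.choose i : ℝ) * s ^ i * (1 - s) ^ (k - i) *
      (∑ l ∈ Finset.range (i + 1), (i.choose l : ℝ) * σ l)
    = ∑ l ∈ Finset.range (k + 1), (k.choose l : ℝ) * σ l * s ^ l := by
  have h1 : ∀ i ∈ Finset.range (k + 1), (∑ l ∈ Finset.range (i + 1), (i.choose l : ℝ) * σ l)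
      = ∑ l ∈ Finset.range (k + 1), (i.choose l : ℝ) * σ l := by
    intro i hi
    apply Finset.sum_subset
    · intro l hl; simp at *; omega
    · intro l _ hl
      rw [Nat.choose_eq_zero_of_lt (by simp at hl; omega)]; simp
  rw [Finset.sum_congr rfl (fun i hi => by rw [h1 i hi, Finset.mul_sum]), Finset.sum_comm]
  apply Finset.sum_congr rfl
  intro l hl
  have hl' : l ≤ k := by simp at hl; omega
  have h2 : ∀ i ∈ Finset.range (k + 1), (k.choose i : ℝ) * s ^ i * (1 - s) ^ (k - i) *
      ((i.choose l : ℝ) * σ l) = σ l * ((k.choose i * i.choose l : ℕ) * s ^ i * (1 - s) ^ (k - i)) := by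
    intro i _; push_cast; ring
  rw [Finset.sum_congr rfl h2, ← Finset.mul_sum]
  have h3 : ∑ i ∈ Finset.range (k + 1), ((k.choose i * i.choose l : ℕ) * s ^ i * (1 - s) ^ (k - i))
      = k.choose l * s ^ l := by
    have hk : k + 1 = l + (k - l + 1) := by omega
    rw [hk, Finset.sum_range_add]
    rw [Finset.sum_eq_zero (fun i hi => by
      rw [Nat.choose_eq_zero_of_lt (Finset.mem_range.1 hi)]; simp), zero_add]
    have := add_pow s (1 - s) (k - l)
    rw [show s + (1 - s) = 1 by ring, one_pow] at this
    conv_rhs => rw [← mul_one (_ * s ^ l), this, Finset.mul_sum]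
    apply Finset.sum_congr rfl
    intro j hj
    have hj' : j ≤ k - l := by simp at hj; omega
    rw [Nat.choose_mul (by omega), show l + j - l = j by omega,
      show k - (l + j) = k - l - j by omega]
    push_cast
    ring
  rw [h3]; ring

lemma choose_two (k i : ℕ) (h : i ≤ k) :
    ((2 * k).choose (2 * i) : ℝ) * (ascPochhammer ℝ (k - i)).eval (1 / 2 : ℝ)
    = k.choose i * (ascPochhammer ℝ k).eval (1 / 2 : ℝ) / (ascPochhammer ℝ i).eval (1 / 2 : ℝ) := by
  have hf : ∀ m : ℕ, ((2 * m).factorial : ℝ)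
      = 4 ^ m * m.factorial * (ascPochhammer ℝ m).eval (1 / 2 : ℝ) := by
    intro m
    induction m with
    | zero => simp
    | succ m ih =>
      rw [asc_right, show 2 * (m + 1) = 2 * m + 1 + 1 by ring, Nat.factorial_succ,
        Nat.factorial_succ, Nat.factorial_succ]
      push_cast
      rw [ih]; ring
  have p : ∀ m : ℕ, (ascPochhammer ℝ m).eval (1 / 2 : ℝ) ≠ 0 :=
    fun m => (asc_pos m (by norm_num)).ne'
  have f0 : ∀ m : ℕ, (m.factorial : ℝ) ≠ 0 := fun m => by exact_mod_cast m.factorial_ne_zero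
  rw [Nat.cast_choose ℝ (show 2 * i ≤ 2 * k by omega), Nat.cast_choose ℝ h,
    show 2 * k - 2 * i = 2 * (k - i) by omega, hf, hf, hf]
  have := p k
  have := p i
  have := p (k - i)
  have := f0 k
  have := f0 i
  have := f0 (k - i)
  have e : (4 : ℝ) ^ k = 4 ^ i * 4 ^ (k - i) := by rw [← pow_add]; congr 1; omega
  rw [e]
  field_simp

lemma delta_sum (k m : ℕ) :
    ∑ l ∈ Finset.range (k + 1), (-1 : ℂ) ^ l * (k.choose l) * (l.choose m)
     = if m = k then (-1) ^ k else 0 := by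
  by_cases hm : k < m
  · rw [if_neg (by omega), Finset.sum_eq_zero]
    intro l hl
    rw [Nat.choose_eq_zero_of_lt (show l < m by simp at hl; omega)]; simp
  push Not at hm
  have hk : k + 1 = m + (k - m + 1) := by omega
  rw [hk, Finset.sum_range_add, Finset.sum_eq_zero (fun i hi => by
      rw [Nat.choose_eq_zero_of_lt (Finset.mem_range.1 hi)]; simp), zero_add]
  have e : ∀ j ∈ Finset.range (k - m + 1), (-1 : ℂ) ^ (m + j) * (k.choose (m + j)) * ((m + j).choose m)
      = (-1) ^ m * k.choose m * ((-1) ^ j * 1 ^ (k - m - j) * (k - m).choose j) := by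
    intro j hj
    have hj' : j ≤ k - m := by simp at hj; omega
    have := Nat.choose_mul (n := k) (k := m + j) (s := m) (by omega)
    rw [show m + j - m = j by omega] at this
    have t : ((k.choose (m + j)) : ℂ) * ((m + j).choose m) = k.choose m * (k - m).choose j := by
      exact_mod_cast this
    rw [mul_assoc, t, pow_add]; ring
  rw [Finset.sum_congr rfl e, ← Finset.mul_sum, ← add_pow]
  by_cases h : m = k
  · subst h; simp
  · rw [if_neg h, neg_add_cancel, zero_pow (by omega), mul_zero]

lemma polar {n : ℕ} (hn : 2 ≤ n) (P : Euc n → ℝ) (d : ℝ)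
    (hP : ∀ r : ℝ, 0 < r → ∀ θ : Sph n, P (r • (θ : Euc n)) = r ^ d * P θ) :
    ∫ x : Euc n, P x * Real.exp (-‖x‖ ^ 2) = (∫ θ, P θ ∂(sphMeasure n)) *
      ∫ r in Set.Ioi (0 : ℝ), r ^ (n - 1) * (r ^ d * Real.exp (-r ^ 2)) := by
  have : Nontrivial (Euc n) := by
    have : Nontrivial (Fin n) := Fin.nontrivial_iff_two_le.2 hn
    have : Nonempty (Fin n) := ⟨⟨0, by omega⟩⟩
    infer_instance
  let G : Euc n → ℝ := fun x => P x * Real.exp (-‖x‖ ^ 2)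
  have hdim : Module.finrank ℝ (Euc n) = n := by simp
  calc
    ∫ x, G x = ∫ x : ({(0)}ᶜ : Set (Euc n)), G x.1 ∂((volume : Measure (Euc n)).comap Subtype.val) := by
      rw [integral_subtype_comap (measurableSet_singleton _).compl G,
        restrict_compl_singleton]
    _ = ∫ p : Sph n × Set.Ioi (0 : ℝ), P p.1 * ((p.2 : ℝ) ^ d * Real.exp (-(p.2 : ℝ) ^ 2))
          ∂(sphMeasure n).prod (.volumeIoiPow (n - 1)) := by
      have := (volume : Measure (Euc n)).measurePreserving_homeomorphUnitSphereProd.integral_comp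
        (Homeomorph.measurableEmbedding _)
        (fun p : Sph n × Set.Ioi (0 : ℝ) => P p.1 * ((p.2 : ℝ) ^ d * Real.exp (-(p.2 : ℝ) ^ 2)))
      rw [hdim] at this
      rw [sphMeasure, ← this]
      refine integral_congr_ae (.of_forall fun x => ?_)
      have hx : (x : Euc n) ≠ 0 := x.2
      have hx' : 0 < ‖(x : Euc n)‖ := norm_pos_iff.2 hx
      have h1 := hP ‖(x : Euc n)‖ hx' (homeomorphUnitSphereProd (Euc n) x).1
      have h2 : ‖(x : Euc n)‖ • ((homeomorphUnitSphereProd (Euc n) x).1 : Euc n) = x := by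
        simp [smul_smul, hx'.ne']
      rw [h2] at h1
      simp only [G, homeomorphUnitSphereProd_apply_snd_coe]
      rw [h1]; ring
    _ = (∫ θ, P θ ∂(sphMeasure n)) *
        ∫ r : Set.Ioi (0 : ℝ), ((r : ℝ) ^ d * Real.exp (-(r : ℝ) ^ 2)) ∂(.volumeIoiPow (n - 1)) := by
      have : SFinite (sphMeasure n) := by unfold sphMeasure; infer_instance
      exact integral_prod_mul (fun θ : Sph n => P θ)
        (fun r : Set.Ioi (0 : ℝ) => ((r : ℝ) ^ d * Real.exp (-(r : ℝ) ^ 2)))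
    _ = _ := by
      congr 1
      simp only [Measure.volumeIoiPow, ENNReal.ofReal]
      rw [integral_withDensity_eq_integral_smul,
        integral_subtype_comap measurableSet_Ioi
          fun a : ℝ ↦ Real.toNNReal (a ^ (n - 1)) • (a ^ d * Real.exp (-a ^ 2)),
        setIntegral_congr_fun measurableSet_Ioi fun x hx ↦ ?_]
      · simp only [NNReal.smul_def, Real.coe_toNNReal _ (pow_nonneg hx.out.le _), smul_eq_mul]
      · exact (measurable_subtype_coe.pow_const _).real_toNNReal

lemma radial {n : ℕ} (hn : 2 ≤ n) {d : ℝ} (hd : 0 ≤ d) :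
    ∫ r in Set.Ioi (0 : ℝ), r ^ (n - 1) * (r ^ d * Real.exp (-r ^ 2))
      = Real.Gamma ((n + d) / 2) / 2 := by
  have := _root_.integral_rpow_mul_exp_neg_rpow (p := 2) (q := n - 1 + d) (by norm_num)
    (by have : (2 : ℝ) ≤ n := by exact_mod_cast hn
        linarith)
  rw [show ((n : ℝ) - 1 + d + 1) = n + d by ring] at this
  rw [← mul_one_div, mul_comm, ← this]
  apply setIntegral_congr_fun measurableSet_Ioi
  intro r hr
  have hr' : 0 < r := hr
  simp only
  rw [Real.rpow_add hr', ← Real.rpow_natCast, Nat.cast_sub (by omega)]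
  norm_num
  ring

lemma moment {q : ℝ} (hq : -1 < q) :
    ∫ t : ℝ, |t| ^ q * Real.exp (-t ^ 2) = Real.Gamma ((q + 1) / 2) := by
  have h := integral_comp_abs (f := fun t => t ^ q * Real.exp (-t ^ 2))
  simp only [sq_abs] at h
  rw [h]
  have := _root_.integral_rpow_mul_exp_neg_rpow (p := 2) (q := q) (by norm_num) hq
  simp only [Real.rpow_two] at this
  rw [this]; ring

lemma moment_int {q : ℝ} (hq : 0 ≤ q) :
    Integrable (fun t : ℝ => |t| ^ q * Real.exp (-t ^ 2)) := by
  by_contra hne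
  have h1 := moment (q := q) (by linarith)
  rw [integral_undef hne] at h1
  exact (Real.Gamma_pos_of_pos (by linarith : 0 < (q + 1) / 2)).ne h1

lemma exists_basis {m : ℕ} (u v : Euc (m + 2)) (hu : ‖u‖ = 1) (hv : ‖v‖ = 1) (huv : ⟪u, v⟫ = 0) :
    ∃ b : OrthonormalBasis (Fin (m + 2)) ℝ (Euc (m + 2)), b 0 = u ∧ b 1 = v := by
  let w : Fin (m + 2) → Euc (m + 2) := fun i => if i = 0 then u else v
  have h01 : (1 : Fin (m + 2)) ≠ 0 := by simp
  have : Orthonormal ℝ (({0, 1} : Set (Fin (m + 2))).domRestrict w) := by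
    constructor
    · rintro ⟨i, hi⟩
      simp only [Set.mem_insert_iff, Set.mem_singleton_iff] at hi
      rcases hi with rfl | rfl <;> simp [w, hu, hv]
    · rintro ⟨i, hi⟩ ⟨j, hj⟩ hij
      simp only [Set.mem_insert_iff, Set.mem_singleton_iff] at hi hj
      rcases hi with rfl | rfl <;> rcases hj with rfl | rfl
      · simp at hij
      · simp [w, huv]
      · simp [w, real_inner_comm, huv]
      · simp at hij
  obtain ⟨b, hb⟩ := this.exists_orthonormalBasis_extension_of_card_eq (by simp)
  exact ⟨b, by rw [hb 0 (by simp)]; simp [w], by rw [hb 1 (by simp)]; simp [w]⟩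

lemma gauss_prod {m : ℕ} (u v : Euc (m + 2)) (hu : ‖u‖ = 1) (hv : ‖v‖ = 1) (huv : ⟪u, v⟫ = 0)
    (g₀ g₁ : ℝ → ℝ) :
    (∫ x : Euc (m + 2), g₀ ⟪u, x⟫ * g₁ ⟪v, x⟫ * Real.exp (-‖x‖ ^ 2)
      = (∫ t, g₀ t * Real.exp (-t ^ 2)) * (∫ t, g₁ t * Real.exp (-t ^ 2)) * √Real.pi ^ m) ∧
    (Integrable (fun t => g₀ t * Real.exp (-t ^ 2)) → Integrable (fun t => g₁ t * Real.exp (-t ^ 2)) →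
      Integrable (fun x : Euc (m + 2) => g₀ ⟪u, x⟫ * g₁ ⟪v, x⟫ * Real.exp (-‖x‖ ^ 2))) := by
  obtain ⟨b, hb0, hb1⟩ := exists_basis u v hu hv huv
  let G : Fin (m + 2) → ℝ → ℝ := Fin.cons (fun t => g₀ t * Real.exp (-t ^ 2))
    (Fin.cons (fun t => g₁ t * Real.exp (-t ^ 2)) (fun _ t => Real.exp (-t ^ 2)))
  have hT : MeasurePreserving (fun y : Fin (m + 2) → ℝ => b.repr.symm (WithLp.toLp 2 y)) :=
    b.measurePreserving_repr_symm.comp (PiLp.volume_preserving_toLp (Fin (m + 2)))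
  have hemb : MeasurableEmbedding (fun y : Fin (m + 2) → ℝ => b.repr.symm (WithLp.toLp 2 y)) :=
    b.repr.symm.toHomeomorph.measurableEmbedding.comp (MeasurableEquiv.toLp 2 _).measurableEmbedding
  have key : ∀ y : Fin (m + 2) → ℝ,
      g₀ ⟪u, b.repr.symm (WithLp.toLp 2 y)⟫ * g₁ ⟪v, b.repr.symm (WithLp.toLp 2 y)⟫ *
        Real.exp (-‖b.repr.symm (WithLp.toLp 2 y)‖ ^ 2) = ∏ i, G i (y i) := by
    intro y
    have e0 : ⟪u, b.repr.symm (WithLp.toLp 2 y)⟫ = y 0 := by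
      rw [← hb0, ← b.repr_apply_apply]; simp
    have e1 : ⟪v, b.repr.symm (WithLp.toLp 2 y)⟫ = y 1 := by
      rw [← hb1, ← b.repr_apply_apply]; simp
    have e2 : ‖b.repr.symm (WithLp.toLp 2 y)‖ ^ 2 = ∑ i, y i ^ 2 := by
      rw [LinearIsometryEquiv.norm_map, EuclideanSpace.norm_sq_eq]; simp
    rw [e0, e1, e2, ← Finset.sum_neg_distrib, Real.exp_sum, Fin.prod_univ_succ, Fin.prod_univ_succ,
      Fin.prod_univ_succ, Fin.prod_univ_succ]
    simp only [G, Fin.cons_zero, Fin.cons_succ]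
    simp only [Fin.succ_zero_eq_one]
    ring
  have hpi : ∫ t : ℝ, Real.exp (-t ^ 2) = √Real.pi := by
    have := integral_gaussian 1
    simpa using this
  constructor
  · rw [← hT.integral_comp hemb]
    simp_rw [key]
    rw [integral_fintype_prod_volume_eq_prod, Fin.prod_univ_succ, Fin.prod_univ_succ]
    simp only [G, Fin.cons_zero, Fin.cons_succ]
    rw [hpi]
    simp
    ring
  · intro h0 h1
    rw [← hT.integrable_comp_emb hemb]
    have : ((fun x : Euc (m + 2) => g₀ ⟪u, x⟫ * g₁ ⟪v, x⟫ * Real.exp (-‖x‖ ^ 2)) ∘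
      fun y : Fin (m + 2) → ℝ => b.repr.symm (WithLp.toLp 2 y)) = fun y => ∏ i, G i (y i) := by
      ext y; exact key y
    rw [this]
    apply Integrable.fintype_prod
    intro i
    refine Fin.cases ?_ (fun i => ?_) i
    · simpa [G] using h0
    · refine Fin.cases ?_ (fun i => ?_) i
      · simpa [G] using h1
      · have := integrable_exp_neg_mul_sq (b := 1) (by norm_num)
        simpa [G] using this

lemma exists_decomp {m : ℕ} (u w : Euc (m + 2)) (hu : ‖u‖ = 1) (hw : ‖w‖ = 1) :
    ∃ (v : Euc (m + 2)) (d : ℝ), ‖v‖ = 1 ∧ ⟪u, v⟫ = 0 ∧ w = ⟪u, w⟫ • u + d • v ∧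
      d ^ 2 = 1 - ⟪u, w⟫ ^ 2 := by
  have huu : ⟪u, u⟫ = 1 := by rw [real_inner_self_eq_norm_sq, hu]; norm_num
  have main : ∀ (v : Euc (m + 2)) (d : ℝ), ‖v‖ = 1 → ⟪u, v⟫ = 0 → w = ⟪u, w⟫ • u + d • v →
      d ^ 2 = 1 - ⟪u, w⟫ ^ 2 := by
    intro v d hv huv h
    have hvv : ⟪v, v⟫ = 1 := by rw [real_inner_self_eq_norm_sq, hv]; norm_num
    have hvu : ⟪v, u⟫ = 0 := by rw [real_inner_comm]; exact huv
    have h1 : ⟪w, w⟫ = 1 := by rw [real_inner_self_eq_norm_sq, hw]; norm_num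
    set c := ⟪u, w⟫
    rw [h] at h1
    simp only [inner_add_left, inner_add_right, real_inner_smul_left, real_inner_smul_right,
      huu, hvv, huv, hvu] at h1
    linarith
  by_cases h : w - ⟪u, w⟫ • u = 0
  · obtain ⟨b, hb⟩ : ∃ b : OrthonormalBasis (Fin (m + 2)) ℝ (Euc (m + 2)), b 0 = u := by
      have : Orthonormal ℝ (({0} : Set (Fin (m + 2))).domRestrict (fun _ => u)) := by
        constructor
        · rintro ⟨i, hi⟩; simp [hu]
        · rintro ⟨i, hi⟩ ⟨j, hj⟩ hij
          simp only [Set.mem_singleton_iff] at hi hj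
          subst hi hj; simp at hij
      obtain ⟨b, hb⟩ := this.exists_orthonormalBasis_extension_of_card_eq (by simp)
      exact ⟨b, hb 0 (by simp)⟩
    have h1 : ‖b 1‖ = 1 := b.norm_eq_one 1
    have h2 : ⟪u, b 1⟫ = 0 := by
      rw [← hb]; exact b.orthonormal.2 (by simp)
    have h3 : w = ⟪u, w⟫ • u + (0 : ℝ) • b 1 := by
      rw [zero_smul, add_zero]; exact sub_eq_zero.1 h
    exact ⟨b 1, 0, h1, h2, h3, main _ _ h1 h2 h3⟩
  · set y := w - ⟪u, w⟫ • u with hy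
    have hy0 : ‖y‖ ≠ 0 := norm_ne_zero_iff.2 h
    have h1 : ‖‖y‖⁻¹ • y‖ = 1 := by rw [norm_smul, norm_inv, norm_norm, inv_mul_cancel₀ hy0]
    have h2 : ⟪u, ‖y‖⁻¹ • y⟫ = 0 := by
      rw [real_inner_smul_right, hy, inner_sub_right, real_inner_smul_right, huu]; simp
    have h3 : w = ⟪u, w⟫ • u + ‖y‖ • (‖y‖⁻¹ • y) := by
      rw [smul_smul, mul_inv_cancel₀ hy0, one_smul, hy]; abel
    exact ⟨_, _, h1, h2, h3, main _ _ h1 h2 h3⟩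

lemma sum_even (h : ℕ → ℝ) (hodd : ∀ i, h (2 * i + 1) = 0) (k : ℕ) :
    ∑ j ∈ Finset.range (2 * k + 1), h j = ∑ i ∈ Finset.range (k + 1), h (2 * i) := by
  induction k with
  | zero => simp
  | succ k ih =>
    rw [show 2 * (k + 1) + 1 = (2 * k + 1) + 1 + 1 by ring, Finset.sum_range_succ,
      Finset.sum_range_succ, ih, hodd, Finset.sum_range_succ _ (k + 1)]
    simp [mul_add]

lemma abs_pow_even (t : ℝ) (i : ℕ) {q : ℝ} (hq : 0 < q) :
    t ^ (2 * i) * |t| ^ q = |t| ^ (2 * i + q) := by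
  rcases eq_or_ne t 0 with rfl | ht
  · simp only [abs_zero]
    rw [Real.zero_rpow hq.ne', Real.zero_rpow (by positivity)]; simp
  · rw [Real.rpow_add (abs_pos.2 ht), ← Even.pow_abs (even_two_mul i), ← Real.rpow_natCast]
    norm_num

lemma int_pow_abs (j : ℕ) {q : ℝ} (hq : 0 ≤ q) :
    Integrable (fun t : ℝ => t ^ j * |t| ^ q * Real.exp (-t ^ 2)) := by
  have h := moment_int (q := j + q) (by positivity)
  refine h.mono' (by fun_prop (disch := positivity)) (.of_forall fun t => ?_)
  rw [norm_mul, norm_mul, norm_pow, Real.norm_eq_abs, Real.norm_eq_abs, Real.norm_eq_abs,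
    Real.abs_exp]
  apply mul_le_mul_of_nonneg_right _ (Real.exp_pos _).le
  rw [abs_of_nonneg (Real.rpow_nonneg (abs_nonneg t) q)]
  rcases eq_or_ne t 0 with rfl | ht
  · simp only [abs_zero]
    rcases eq_or_ne q 0 with rfl | hq0
    · simp
    · rw [Real.zero_rpow hq0]; simp; positivity
  · rw [Real.rpow_add (abs_pos.2 ht), Real.rpow_natCast]

lemma odd_zero (j : ℕ) (q : ℝ) :
    ∫ t : ℝ, t ^ (2 * j + 1) * |t| ^ q * Real.exp (-t ^ 2) = 0 := by
  have h := integral_neg_eq_self (fun t : ℝ => t ^ (2 * j + 1) * |t| ^ q * Real.exp (-t ^ 2)) volume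
  have e : ∀ t : ℝ, (-t) ^ (2 * j + 1) * |-t| ^ q * Real.exp (-(-t) ^ 2)
      = - (t ^ (2 * j + 1) * |t| ^ q * Real.exp (-t ^ 2)) := by
    intro t; rw [abs_neg, neg_sq, Odd.neg_pow ⟨j, rfl⟩]; ring
  simp_rw [e] at h
  rw [integral_neg] at h
  linarith

lemma gauss_moment {m : ℕ} (u w : Euc (m + 2)) (hu : ‖u‖ = 1) (hw : ‖w‖ = 1) (k : ℕ) {q : ℝ}
    (hq : 0 < q) :
    ∫ x : Euc (m + 2), (⟪x, w⟫ ^ (2 * k) * |⟪x, u⟫| ^ q) * Real.exp (-‖x‖ ^ 2)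
      = ∑ i ∈ Finset.range (k + 1), ((2 * k).choose (2 * i) : ℝ) * (⟪u, w⟫ ^ 2) ^ i *
        (1 - ⟪u, w⟫ ^ 2) ^ (k - i) * Real.Gamma (i + (q + 1) / 2) * Real.Gamma ((k - i : ℕ) + 1 / 2)
        * √Real.pi ^ m := by
  obtain ⟨v, d, hv, huv, hwd, hd⟩ := exists_decomp u w hu hw
  set c := ⟪u, w⟫ with hc
  let T : ℕ → Euc (m + 2) → ℝ := fun j x => (((2 * k).choose j : ℝ) * c ^ j * d ^ (2 * k - j)) *
    ((fun t => t ^ j * |t| ^ q) ⟪u, x⟫ * (fun t => t ^ (2 * k - j)) ⟪v, x⟫ * Real.exp (-‖x‖ ^ 2))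
  have h1 : ∀ x : Euc (m + 2), (⟪x, w⟫ ^ (2 * k) * |⟪x, u⟫| ^ q) * Real.exp (-‖x‖ ^ 2)
      = ∑ j ∈ Finset.range (2 * k + 1), T j x := by
    intro x
    have : ⟪x, w⟫ = c * ⟪u, x⟫ + d * ⟪v, x⟫ := by
      rw [hwd, inner_add_right, real_inner_smul_right, real_inner_smul_right,
        real_inner_comm u x, real_inner_comm v x]
    rw [this, add_pow, Finset.sum_mul, Finset.sum_mul, real_inner_comm u x]
    apply Finset.sum_congr rfl
    intro j _
    simp only [T, mul_pow]
    ring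
  have i0 : ∀ j, Integrable (fun t : ℝ => (t ^ j) * Real.exp (-t ^ 2)) := by
    intro j
    have := int_pow_abs j (q := 0) le_rfl
    simpa using this
  have hTint : ∀ j, Integrable (T j) := by
    intro j
    apply Integrable.const_mul
    apply (gauss_prod u v hu hv huv (fun t => t ^ j * |t| ^ q) (fun t => t ^ (2 * k - j))).2
    · exact int_pow_abs j hq.le
    · exact i0 _
  simp_rw [h1]
  rw [integral_finsetSum _ (fun j _ => hTint j)]
  have h2 : ∀ j, ∫ x, T j x = (((2 * k).choose j : ℝ) * c ^ j * d ^ (2 * k - j)) *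
      ((∫ t : ℝ, t ^ j * |t| ^ q * Real.exp (-t ^ 2)) *
        (∫ t : ℝ, t ^ (2 * k - j) * Real.exp (-t ^ 2)) * √Real.pi ^ m) := by
    intro j
    rw [integral_const_mul]
    congr 1
    exact (gauss_prod u v hu hv huv (fun t => t ^ j * |t| ^ q) (fun t => t ^ (2 * k - j))).1
  rw [Finset.sum_congr rfl (fun j _ => h2 j), sum_even]
  · apply Finset.sum_congr rfl
    intro i hi
    have hi' : i ≤ k := by simp at hi; omega
    have e1 : ∫ t : ℝ, t ^ (2 * i) * |t| ^ q * Real.exp (-t ^ 2) = Real.Gamma (i + (q + 1) / 2) := by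
      simp_rw [abs_pow_even _ i hq]
      rw [moment (by have : (0 : ℝ) ≤ i := Nat.cast_nonneg i
                     linarith)]
      congr 1; ring
    have e2 : ∫ t : ℝ, t ^ (2 * k - 2 * i) * Real.exp (-t ^ 2)
        = Real.Gamma ((k - i : ℕ) + 1 / 2) := by
      have := moment (q := ((2 * (k - i) : ℕ) : ℝ)) (by
        have : (0 : ℝ) ≤ ((2 * (k - i) : ℕ) : ℝ) := Nat.cast_nonneg _
        linarith)
      simp_rw [Real.rpow_natCast, Even.pow_abs (even_two_mul (k - i))] at this
      rw [show 2 * k - 2 * i = 2 * (k - i) by omega, this]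
      congr 1; push_cast; ring
    rw [e1, e2, show 2 * k - 2 * i = 2 * (k - i) by omega, pow_mul, pow_mul, hd]
    ring
  · intro i
    rw [odd_zero]; ring

lemma total_mass {n : ℕ} (hn : 2 ≤ n) : (sphMeasure n).real Set.univ = sigmaS (n - 1) := by
  have h := polar hn (fun _ => 1) 0 (by intros; simp)
  rw [radial hn le_rfl] at h
  obtain ⟨m, rfl⟩ : ∃ m, n = m + 2 := ⟨n - 2, by omega⟩
  let b := EuclideanSpace.basisFun (Fin (m + 2)) ℝ
  have h2 := (gauss_prod (b 0) (b 1) (b.norm_eq_one 0) (b.norm_eq_one 1)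
    (b.orthonormal.2 (by simp)) (fun _ => 1) (fun _ => 1)).1
  have hpi : ∫ t : ℝ, Real.exp (-t ^ 2) = √Real.pi := by
    have := integral_gaussian 1
    simpa using this
  simp only [one_mul, mul_one] at h2 h
  rw [h2, hpi, integral_const, smul_eq_mul, mul_one] at h
  have hG : 0 < Real.Gamma (((m + 2 : ℕ) + 0 : ℝ) / 2) :=
    Real.Gamma_pos_of_pos (by positivity)
  have e : √Real.pi * √Real.pi * √Real.pi ^ m = Real.pi ^ (((m : ℝ) + 2) / 2) := by
    rw [show √Real.pi * √Real.pi * √Real.pi ^ m = √Real.pi ^ (m + 2) by ring, Real.sqrt_eq_rpow,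
      ← Real.rpow_natCast, ← Real.rpow_mul Real.pi_pos.le]
    congr 1; push_cast; ring
  rw [e] at h
  unfold sigmaS
  have e2 : (((m + 2 - 1 : ℕ) : ℝ) + 1) / 2 = ((m + 2 : ℕ) + 0 : ℝ) / 2 := by
    rw [show m + 2 - 1 = m + 1 by omega]; push_cast; ring
  rw [e2, eq_div_iff hG.ne', show ((m + 2 : ℕ) + 0 : ℝ) / 2 = ((m : ℝ) + 2) / 2 by push_cast; ring, h,
    show ((m + 2 : ℕ) + 0 : ℝ) / 2 = ((m : ℝ) + 2) / 2 by push_cast; ring]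
  ring

lemma Gamma_asc (l : ℕ) {x : ℝ} (hx : ∀ j : ℕ, x ≠ -j) :
    Real.Gamma (x + l) = Real.Gamma x * (ascPochhammer ℝ l).eval x := by
  induction l with
  | zero => simp
  | succ l ih =>
    rw [asc_right, ← mul_assoc, ← ih, Nat.cast_succ, ← add_assoc, Real.Gamma_add_one, mul_comm]
    intro h; exact hx l (by linarith)

/-- Coefficients of the transform of zonal monomials. -/
def rcoef (n k l : ℕ) (a : ℝ) : ℝ :=
  (k.choose l : ℝ) * (-1) ^ l * ((ascPochhammer ℝ k).eval (1 / 2 : ℝ) /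
    (ascPochhammer ℝ l).eval (1 / 2 : ℝ)) * Real.Gamma ((1 - a) / 2 + l) /
    Real.Gamma ((n + a - 1) / 2 + k)

lemma sphere_moment {n : ℕ} (hn : 2 ≤ n) (u w : Sph n) (k : ℕ) {a : ℝ} (h1 : 1 < a) (h3 : a < 3) :
    (sigmaS (n - 1) * Real.Gamma ((1 - a) / 2) /
      (2 * Real.pi ^ (((n : ℝ) - 1) / 2) * Real.Gamma (a / 2))) *
      ((sigmaS (n - 1))⁻¹ * ∫ θ : Sph n, ⟪(θ : Euc n), (w : Euc n)⟫ ^ (2 * k) *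
        |⟪(θ : Euc n), (u : Euc n)⟫| ^ (a - 1) ∂(sphMeasure n)) =
    ∑ l ∈ Finset.range (k + 1), rcoef n k l a * ⟪(u : Euc n), (w : Euc n)⟫ ^ (2 * l) := by
  have hσ : sigmaS (n - 1) ≠ 0 := by
    unfold sigmaS
    have : 0 < Real.Gamma ((((n - 1 : ℕ) : ℝ) + 1) / 2) := Real.Gamma_pos_of_pos (by positivity)
    positivity
  have hpol := polar hn (fun x => ⟪x, (w : Euc n)⟫ ^ (2 * k) * |⟪x, (u : Euc n)⟫| ^ (a - 1))
    (2 * k + (a - 1)) (by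
      intro r hr θ
      rw [real_inner_smul_left, real_inner_smul_left, abs_mul, abs_of_pos hr,
        Real.mul_rpow hr.le (abs_nonneg _), mul_pow, Real.rpow_add hr,
        show (2 * k : ℝ) = ((2 * k : ℕ) : ℝ) by push_cast; ring, Real.rpow_natCast]
      ring)
  have hk0 : (0 : ℝ) ≤ k := Nat.cast_nonneg k
  rw [radial hn (by linarith)] at hpol
  obtain ⟨m, rfl⟩ : ∃ m, n = m + 2 := ⟨n - 2, by omega⟩
  have hu : ‖(u : Euc (m + 2))‖ = 1 := by simpa using u.2
  have hw : ‖(w : Euc (m + 2))‖ = 1 := by simpa using w.2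
  rw [gauss_moment _ _ hu hw k (by linarith)] at hpol
  set s := ⟪(u : Euc (m + 2)), (w : Euc (m + 2))⟫ ^ 2 with hs
  set I := ∫ θ : Sph (m + 2), ⟪(θ : Euc (m + 2)), (w : Euc (m + 2))⟫ ^ (2 * k) *
        |⟪(θ : Euc (m + 2)), (u : Euc (m + 2))⟫| ^ (a - 1) ∂(sphMeasure (m + 2)) with hI
  set N : ℝ := ((m + 2 : ℕ) : ℝ) with hN
  have hN2 : 2 ≤ N := by rw [hN]; exact_mod_cast hn
  rw [show (N + (2 * k + (a - 1))) / 2 = (N + a - 1) / 2 + k by ring] at hpol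
  have hGk : 0 < Real.Gamma ((N + a - 1) / 2 + k) :=
    Real.Gamma_pos_of_pos (by linarith)
  have hGa : 0 < Real.Gamma (a / 2) := Real.Gamma_pos_of_pos (by linarith)
  have hI' : I = 2 * √Real.pi ^ m * Real.Gamma (a / 2) * √Real.pi *
      (ascPochhammer ℝ k).eval (1 / 2 : ℝ) / Real.Gamma ((N + a - 1) / 2 + k) *
      ∑ l ∈ Finset.range (k + 1), (k.choose l : ℝ) * sigP (1 / 2) ((a - 1) / 2) l * s ^ l := by
    rw [← bern, div_mul_eq_mul_div, eq_div_iff hGk.ne', show I * Real.Gamma ((N + a - 1) / 2 + k)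
      = 2 * (I * (Real.Gamma ((N + a - 1) / 2 + k) / 2)) by ring, ← hpol, Finset.mul_sum, Finset.mul_sum]
    apply Finset.sum_congr rfl
    intro i hi
    have hi' : i ≤ k := by simp at hi; omega
    rw [← rho_eq i _ _ (by norm_num)]
    have g1 : Real.Gamma (i + (a - 1 + 1) / 2)
        = Real.Gamma (a / 2) * (ascPochhammer ℝ i).eval (a / 2) := by
      rw [← Gamma_asc]
      · congr 1; ring
      · intro j hj
        have : (0 : ℝ) ≤ j := Nat.cast_nonneg j
        linarith
    have g2 : Real.Gamma ((k - i : ℕ) + 1 / 2)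
        = √Real.pi * (ascPochhammer ℝ (k - i)).eval (1 / 2 : ℝ) := by
      rw [← Real.Gamma_one_half_eq, ← Gamma_asc, add_comm]
      intro j hj
      have : (0 : ℝ) ≤ j := Nat.cast_nonneg j
      linarith
    have g3 := choose_two k i hi'
    rw [g1, g2]
    unfold rhoP
    rw [show (1 / 2 + (a - 1) / 2 : ℝ) = a / 2 by ring]
    calc _ = 2 * s ^ i * (1 - s) ^ (k - i) * (Real.Gamma (a / 2) * (ascPochhammer ℝ i).eval (a / 2))
          * √Real.pi * √Real.pi ^ m * (((2 * k).choose (2 * i) : ℝ) *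
            (ascPochhammer ℝ (k - i)).eval (1 / 2 : ℝ)) := by ring
      _ = _ := by rw [g3]; ring
  rw [hI', Finset.mul_sum, Finset.mul_sum, Finset.mul_sum]
  apply Finset.sum_congr rfl
  intro l _
  have hp : Real.pi ^ ((N - 1) / 2) = √Real.pi ^ m * √Real.pi := by
    rw [show √Real.pi ^ m * √Real.pi = √Real.pi ^ (m + 1) by ring, Real.sqrt_eq_rpow,
      ← Real.rpow_natCast, ← Real.rpow_mul Real.pi_pos.le]
    congr 1; rw [hN]; push_cast; ring
  have hpp : √Real.pi ≠ 0 := (Real.sqrt_pos.2 Real.pi_pos).ne'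
  rw [hp, pow_mul, ← hs]
  unfold rcoef sigP
  rw [← hN]
  have gg : Real.Gamma ((1 - a) / 2 + l)
      = Real.Gamma ((1 - a) / 2) * (ascPochhammer ℝ l).eval ((1 - a) / 2) := by
    apply Gamma_asc
    intro j hj
    apply notOdd_of_real h1 h3
    exact ⟨j, by
      have : a = 2 * j + 1 := by linarith
      rw [this]; push_cast; ring⟩
  rw [gg, show -((a - 1) / 2) = (1 - a) / 2 by ring]
  field_simp

/-- Even zonal monomials on the sphere. -/
def sk {n : ℕ} (k : ℕ) (w : Sph n) : Sph n → ℂ :=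
  fun θ => ((⟪(θ : Euc n), (w : Euc n)⟫ ^ (2 * k) : ℝ) : ℂ)

lemma sk_smooth {n : ℕ} (k : ℕ) (w : Sph n) : SmoothSph (sk k w) := by
  refine ⟨fun x => ((⟪x, (w : Euc n)⟫ ^ (2 * k) : ℝ) : ℂ), ?_, fun x => rfl⟩
  exact Complex.ofRealCLM.contDiff.comp
    (((contDiff_id (𝕜 := ℝ) (E := Euc n)).inner ℝ contDiff_const).pow _)

/-- Complex coefficients. -/
def ccoef (n k l : ℕ) (α : ℂ) : ℂ :=
  (k.choose l : ℂ) * (-1) ^ l * (((ascPochhammer ℝ k).eval (1 / 2 : ℝ) /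
    (ascPochhammer ℝ l).eval (1 / 2 : ℝ) : ℝ) : ℂ) * Complex.Gamma ((1 - α) / 2 + l) *
    (Complex.Gamma ((n + α - 1) / 2 + k))⁻¹

lemma ccoef_real (n k l : ℕ) (a : ℝ) : ccoef n k l a = (rcoef n k l a : ℂ) := by
  unfold ccoef rcoef
  have e1 : (1 - (a : ℂ)) / 2 + l = (((1 - a) / 2 + l : ℝ) : ℂ) := by push_cast; ring
  have e2 : ((n : ℂ) + a - 1) / 2 + k = (((n + a - 1) / 2 + k : ℝ) : ℂ) := by push_cast; ring
  rw [e1, e2, Complex.Gamma_ofReal, Complex.Gamma_ofReal, ← Complex.ofReal_inv, div_eq_mul_inv]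
  push_cast
  rfl

lemma notpole {α : ℂ} (hα : α ∈ domU) (l j : ℕ) : (1 - α) / 2 + l ≠ -j := by
  intro h
  apply hα
  refine ⟨l + j, ?_⟩
  push_cast
  linear_combination (-2) * h

lemma ccoef_diff (n k l : ℕ) : DifferentiableOn ℂ (ccoef n k l) domU := by
  unfold ccoef
  intro α hα
  apply DifferentiableAt.differentiableWithinAt
  apply DifferentiableAt.mul
  · apply DifferentiableAt.mul (differentiableAt_const _)
    have := (Complex.differentiableAt_Gamma ((1 - α) / 2 + l) (fun j => notpole hα l j))
    exact DifferentiableAt.comp (f := fun α : ℂ => (1 - α) / 2 + (l : ℂ)) α this (by fun_prop)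
  · have := Complex.differentiable_one_div_Gamma ((n + α - 1) / 2 + k)
    exact DifferentiableAt.comp (f := fun α : ℂ => ((n : ℂ) + α - 1) / 2 + (k : ℂ)) α this (by fun_prop)

lemma avg_eq {n : ℕ} (hn : 2 ≤ n) (f : Sph n → ℂ) :
    (⨍ θ, f θ ∂(sphMeasure n)) = ((sigmaS (n - 1) : ℝ) : ℂ)⁻¹ * ∫ θ, f θ ∂(sphMeasure n) := by
  rw [average_eq, total_mass hn, Complex.real_smul, Complex.ofReal_inv]

lemma M_sk_real {n : ℕ} (hn : 2 ≤ n) (MF : CosineFamily n) (k : ℕ) (w u : Sph n) {a : ℝ}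
    (h1 : 1 < a) (h3 : a < 3) :
    MF.M a (sk k w) u = ∑ l ∈ Finset.range (k + 1), ccoef n k l a * sk l w u := by
  rw [MF.formula (by simp; linarith) (notOdd_of_real h1 h3) (sk_smooth k w)]
  unfold cosT
  rw [avg_eq hn]
  have e : ∀ θ : Sph n, sk k w θ * ((|⟪(θ : Euc n), (u : Euc n)⟫| : ℝ) : ℂ) ^ ((a : ℂ) - 1)
      = ((⟪(θ : Euc n), (w : Euc n)⟫ ^ (2 * k) * |⟪(θ : Euc n), (u : Euc n)⟫| ^ (a - 1) : ℝ) : ℂ) := by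
    intro θ
    rw [Complex.ofReal_mul, Complex.ofReal_cpow (abs_nonneg _)]
    simp [sk]
  simp_rw [e, ccoef_real]
  rw [integral_complex_ofReal]
  simp only [sk]
  have g : gammaM n a = ((sigmaS (n - 1) * Real.Gamma ((1 - a) / 2) /
      (2 * Real.pi ^ (((n : ℝ) - 1) / 2) * Real.Gamma (a / 2)) : ℝ) : ℂ) := by
    unfold gammaM
    have e1 : (1 - (a : ℂ)) / 2 = (((1 - a) / 2 : ℝ) : ℂ) := by push_cast; ring
    have e2 : (a : ℂ) / 2 = ((a / 2 : ℝ) : ℂ) := by push_cast; ring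
    have e3 : ((n : ℂ) - 1) / 2 = (((n - 1) / 2 : ℝ) : ℂ) := by push_cast; ring
    rw [e1, e2, e3, Complex.Gamma_ofReal, Complex.Gamma_ofReal, ← Complex.ofReal_cpow Real.pi_pos.le]
    push_cast
    rfl
  rw [g]
  exact_mod_cast sphere_moment hn u w k h1 h3

lemma M_sk {n : ℕ} (hn : 2 ≤ n) (MF : CosineFamily n) (k : ℕ) (w : Sph n) {α : ℂ}
    (hα : α ∈ domU) :
    MF.M α (sk k w) = ∑ l ∈ Finset.range (k + 1), ccoef n k l α • sk l w := by
  ext u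
  have := identU (f := fun α => MF.M α (sk k w) u)
    (g := fun α => ∑ l ∈ Finset.range (k + 1), ccoef n k l α * sk l w u)
    (MF.analytic (sk_smooth k w) u)
    (DifferentiableOn.fun_sum fun l _ => (ccoef_diff n k l).mul_const _)
    (fun a h1 h3 => M_sk_real hn MF k w u h1 h3) hα
  simpa using this

lemma M_sum {n : ℕ} (MF : CosineFamily n) (α : ℂ) {ι : Type*} (s : Finset ι) (c : ι → ℂ)
    (f : ι → Sph n → ℂ) : MF.M α (∑ i ∈ s, c i • f i) = ∑ i ∈ s, c i • MF.M α (f i) := by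
  have := map_sum (IsLinearMap.mk' _ (MF.linear α)) (fun i => c i • f i) s
  simp only [map_smul] at this
  exact this

lemma M_M_sk {n : ℕ} (hn : 2 ≤ n) (MF : CosineFamily n) (k : ℕ) (w : Sph n) {α β : ℂ}
    (hα : α ∈ domU) (hβ : β ∈ domU) (hαβ : α + β = 2 - n) :
    MF.M β (MF.M α (sk k w)) = sk k w := by
  rw [M_sk hn MF k w hα, M_sum]
  have h1 : ∀ l ∈ Finset.range (k + 1), ccoef n k l α • MF.M β (sk l w)
      = ∑ m ∈ Finset.range (k + 1), (ccoef n k l α * ccoef n l m β) • sk m w := by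
    intro l hl
    rw [M_sk hn MF l w hβ, Finset.smul_sum]
    simp only [smul_smul]
    apply Finset.sum_subset
    · intro m; simp at hl ⊢; omega
    · intro m _ hm
      have : l < m := by simp at hm; omega
      simp [ccoef, Nat.choose_eq_zero_of_lt this]
  rw [Finset.sum_congr rfl h1, Finset.sum_comm]
  simp_rw [← Finset.sum_smul]
  have hG1 : ∀ l : ℕ, Complex.Gamma ((1 - α) / 2 + l) ≠ 0 := fun l =>
    Complex.Gamma_ne_zero (fun j => notpole hα l j)
  have hG2 : ∀ l : ℕ, Complex.Gamma ((1 - β) / 2 + l) ≠ 0 := fun l =>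
    Complex.Gamma_ne_zero (fun j => notpole hβ l j)
  have hP : ∀ l : ℕ, (((ascPochhammer ℝ l).eval (1 / 2 : ℝ) : ℝ) : ℂ) ≠ 0 := fun l => by
    exact_mod_cast (asc_pos l (by norm_num)).ne'
  have hc : ∀ m ∈ Finset.range (k + 1),
      ∑ l ∈ Finset.range (k + 1), ccoef n k l α * ccoef n l m β = if m = k then 1 else 0 := by
    intro m hm
    have : ∀ l ∈ Finset.range (k + 1), ccoef n k l α * ccoef n l m β =
        ((-1) ^ m * (((ascPochhammer ℝ k).eval (1 / 2 : ℝ) /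
          (ascPochhammer ℝ m).eval (1 / 2 : ℝ) : ℝ) : ℂ) * Complex.Gamma ((1 - β) / 2 + m) *
          (Complex.Gamma ((1 - β) / 2 + k))⁻¹) *
          ((-1 : ℂ) ^ l * (k.choose l) * (l.choose m)) := by
      intro l _
      unfold ccoef
      have e1 : ((n : ℂ) + α - 1) / 2 = (1 - β) / 2 := by linear_combination hαβ / 2
      have e2 : ((n : ℂ) + β - 1) / 2 = (1 - α) / 2 := by linear_combination hαβ / 2
      rw [e1, e2]
      push_cast
      have := hG1 l
      have := hG2 k
      have := hP l
      have := hP m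
      generalize Complex.Gamma ((1 - α) / 2 + l) = A at *
      generalize Complex.Gamma ((1 - β) / 2 + k) = B at *
      generalize Complex.Gamma ((1 - β) / 2 + m) = C at *
      field_simp
    rw [Finset.sum_congr rfl this, ← Finset.mul_sum, delta_sum]
    split_ifs with h
    · subst h
      have h2 : ((-1 : ℂ) ^ m) * (-1) ^ m = 1 := by rw [← mul_pow]; simp
      rw [div_self (asc_pos m (by norm_num)).ne', Complex.ofReal_one, mul_one, mul_assoc ((-1) ^ m),
        mul_inv_cancel₀ (hG2 m), mul_one, h2]
    · simp
  rw [Finset.sum_congr rfl (fun m hm => by rw [hc m hm])]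
  simp

lemma multM_inv {n : ℕ} {α β : ℂ} (hα : ¬ IsPosOdd α) (hβ : ¬ IsPosOdd β)
    (hαβ : α + β = 2 - n) (j : ℕ) (hj : Even j) : multM n j α * multM n j β = 1 := by
  obtain ⟨k, rfl⟩ := hj
  unfold multM
  have e1 : ((k + k : ℕ) : ℂ) / 2 + ((n : ℂ) - 1 + α) / 2 = (1 - β) / 2 + k := by
    push_cast; linear_combination hαβ / 2
  have e2 : ((k + k : ℕ) : ℂ) / 2 + ((n : ℂ) - 1 + β) / 2 = (1 - α) / 2 + k := by
    push_cast; linear_combination hαβ / 2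
  have e3 : ((k + k : ℕ) : ℂ) / 2 + (1 - α) / 2 = (1 - α) / 2 + k := by push_cast; ring
  have e4 : ((k + k : ℕ) : ℂ) / 2 + (1 - β) / 2 = (1 - β) / 2 + k := by push_cast; ring
  rw [e1, e2, e3, e4]
  have h1 : Complex.Gamma ((1 - α) / 2 + k) ≠ 0 :=
    Complex.Gamma_ne_zero (fun j => notpole hα k j)
  have h2 : Complex.Gamma ((1 - β) / 2 + k) ≠ 0 :=
    Complex.Gamma_ne_zero (fun j => notpole hβ k j)
  have h3 : ((-1 : ℂ) ^ ((k + k) / 2)) * (-1) ^ ((k + k) / 2) = 1 := by rw [← mul_pow]; simp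
  generalize Complex.Gamma ((1 - α) / 2 + k) = A at *
  generalize Complex.Gamma ((1 - β) / 2 + k) = B at *
  field_simp
  linear_combination h3

/-- Action of a linear isometry on the sphere. -/
def rotS {n : ℕ} (R : Euc n ≃ₗᵢ[ℝ] Euc n) (x : Sph n) : Sph n :=
  ⟨R x, by have := x.2; simp at this ⊢⟩

@[simp] lemma rotS_coe {n : ℕ} (R : Euc n ≃ₗᵢ[ℝ] Euc n) (x : Sph n) :
    ((rotS R x : Sph n) : Euc n) = R x := rfl

lemma rotS_cont {n : ℕ} (R : Euc n ≃ₗᵢ[ℝ] Euc n) : Continuous (rotS R) :=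
  (R.continuous.comp continuous_subtype_val).subtype_mk _

lemma rotS_inj {n : ℕ} (R : Euc n ≃ₗᵢ[ℝ] Euc n) : Function.Injective (rotS R) := by
  intro x y h
  have := congrArg (fun z : Sph n => (z : Euc n)) h
  exact Subtype.ext (R.injective this)

lemma rotS_emb {n : ℕ} (R : Euc n ≃ₗᵢ[ℝ] Euc n) : MeasurableEmbedding (rotS R) :=
  ((rotS_cont R).isClosedEmbedding (rotS_inj R)).measurableEmbedding

lemma rotS_mp {n : ℕ} (R : Euc n ≃ₗᵢ[ℝ] Euc n) :
    MeasurePreserving (rotS R) (sphMeasure n) (sphMeasure n) := by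
  refine ⟨(rotS_cont R).measurable, ?_⟩
  ext s hs
  rw [Measure.map_apply (rotS_cont R).measurable hs]
  unfold sphMeasure
  rw [Measure.toSphere_apply' _ hs, Measure.toSphere_apply' _ ((rotS_cont R).measurable hs)]
  congr 1
  refine Eq.trans ?_
    (R.measurePreserving.measure_preimage_emb R.toHomeomorph.measurableEmbedding _)
  congr 1
  ext x
  simp only [Set.mem_smul, Set.mem_image, Set.mem_preimage]
  constructor
  · rintro ⟨r, hr, _, ⟨θ, hθ, rfl⟩, rfl⟩
    exact ⟨r, hr, _, ⟨rotS R θ, hθ, rfl⟩, by simp⟩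
  · rintro ⟨r, hr, _, ⟨θ, hθ, rfl⟩, h⟩
    refine ⟨r, hr, _, ⟨rotS R.symm θ, ?_, rfl⟩, ?_⟩
    · have : rotS R (rotS R.symm θ) = θ := Subtype.ext (by simp)
      rwa [this]
    · apply R.injective
      rw [← h]; simp

lemma smooth_rot {n : ℕ} {f : Sph n → ℂ} (hf : SmoothSph f) (R : Euc n ≃ₗᵢ[ℝ] Euc n) :
    SmoothSph (f ∘ rotS R) := by
  obtain ⟨F, hF, hfF⟩ := hf
  exact ⟨F ∘ R, hF.comp R.contDiff, fun x => hfF _⟩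

lemma M_rot {n : ℕ} (hn : 2 ≤ n) (MF : CosineFamily n) {f : Sph n → ℂ} (hf : SmoothSph f)
    (R : Euc n ≃ₗᵢ[ℝ] Euc n) (u : Sph n) {α : ℂ} (hα : α ∈ domU) :
    MF.M α (f ∘ rotS R) u = MF.M α f (rotS R u) := by
  refine identU (f := fun α => MF.M α (f ∘ rotS R) u) (g := fun α => MF.M α f (rotS R u))
    (MF.analytic (smooth_rot hf R) u) (MF.analytic hf _) ?_ hα
  intro a h1 h3
  rw [MF.formula (by simp; linarith) (notOdd_of_real h1 h3) hf,
    MF.formula (by simp; linarith) (notOdd_of_real h1 h3) (smooth_rot hf R)]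
  unfold cosT
  rw [avg_eq hn, avg_eq hn, ← (rotS_mp R).integral_comp (rotS_emb R)
    (fun θ => f θ * ((|⟪(θ : Euc n), ((rotS R u : Sph n) : Euc n)⟫| : ℝ) : ℂ) ^ ((a : ℂ) - 1))]
  simp

lemma exists_rot {n : ℕ} (u v : Sph n) : ∃ R : Euc n ≃ₗᵢ[ℝ] Euc n, rotS R u = v := by
  refine ⟨(Submodule.span ℝ {(u : Euc n) - v})ᗮ.reflection, Subtype.ext ?_⟩
  apply Submodule.reflection_sub
  rw [norm_eq_of_mem_sphere, norm_eq_of_mem_sphere]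

instance sph_fin (n : ℕ) : IsFiniteMeasure (sphMeasure n) := by
  unfold sphMeasure; infer_instance

lemma inner_abs_le {n : ℕ} (u v : Sph n) : |⟪(u : Euc n), (v : Euc n)⟫| ≤ 1 := by
  have := abs_real_inner_le_norm (u : Euc n) (v : Euc n)
  rwa [norm_eq_of_mem_sphere, norm_eq_of_mem_sphere, mul_one] at this

lemma kern_le {n : ℕ} (u v : Sph n) {a : ℝ} (h1 : 1 < a) :
    ‖((|⟪(u : Euc n), (v : Euc n)⟫| : ℝ) : ℂ) ^ ((a : ℂ) - 1)‖ ≤ 1 := by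
  have : ((|⟪(u : Euc n), (v : Euc n)⟫| : ℝ) : ℂ) ^ ((a : ℂ) - 1)
      = ((|⟪(u : Euc n), (v : Euc n)⟫| ^ (a - 1) : ℝ) : ℂ) := by
    rw [Complex.ofReal_cpow (abs_nonneg _)]; push_cast; rfl
  rw [this, Complex.norm_real, Real.norm_of_nonneg (by positivity)]
  exact Real.rpow_le_one (abs_nonneg _) (inner_abs_le u v) (by linarith)

lemma cosT_bound {n : ℕ} (hn : 2 ≤ n) (u : Sph n) {a : ℝ} (h1 : 1 < a) :
    ∃ D : ℝ, ∀ (f : Sph n → ℂ) (C : ℝ), (∀ x, ‖f x‖ ≤ C) → ‖cosT n a f u‖ ≤ D * C := by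
  refine ⟨‖gammaM n a‖ * (‖((sigmaS (n - 1) : ℝ) : ℂ)⁻¹‖ * (sphMeasure n).real Set.univ), ?_⟩
  intro f C hC
  unfold cosT
  rw [avg_eq hn, norm_mul, norm_mul, mul_assoc, mul_assoc]
  gcongr
  rw [mul_comm]
  apply norm_integral_le_of_norm_le_const
  refine .of_forall fun θ => ?_
  rw [norm_mul]
  have h2 := kern_le θ u h1
  have h3 := hC θ
  calc _ ≤ C * 1 := by gcongr; exact (norm_nonneg _).trans h3
    _ = C := mul_one C

lemma exists_ext {n : ℕ} {f : Sph n → ℂ} (hf : SmoothSph f) :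
    ∃ (F : Euc n → ℂ) (B : ℕ → ℝ), ContDiff ℝ (⊤ : ℕ∞) F ∧ (∀ x : Sph n, f x = F x) ∧
      ∀ k x, ‖iteratedFDeriv ℝ k F x‖ ≤ B k := by
  obtain ⟨F, hF, hfF⟩ := hf
  let χ : ContDiffBump (0 : Euc n) := ⟨1, 2, by norm_num, by norm_num⟩
  have hs : ContDiff ℝ (⊤ : ℕ∞) (fun x => χ x • F x) := χ.contDiff.smul hF
  have hc : HasCompactSupport (fun x => χ x • F x) := χ.hasCompactSupport.smul_right
  have : ∀ k : ℕ, ∃ C, ∀ x, ‖iteratedFDeriv ℝ k (fun x => χ x • F x) x‖ ≤ C := fun k =>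
    (hs.continuous_iteratedFDeriv (by exact_mod_cast le_top)).bounded_above_of_compact_support
      (hc.iteratedFDeriv k)
  choose B hB using this
  refine ⟨_, B, hs, fun x => ?_, hB⟩
  rw [χ.one_of_mem_closedBall (by simp [χ]), one_smul, hfF]

/-- The index space of absolutely summable families over the orthogonal group. -/
abbrev L1G (n : ℕ) := lp (fun _ : Euc n ≃ₗᵢ[ℝ] Euc n => ℂ) 1

lemma l1_summable {n : ℕ} (c : L1G n) : Summable fun R => ‖c R‖ := by
  have := (lp.memℓp c).summable (by simp)
  simpa using this

lemma l1_norm {n : ℕ} (c : L1G n) : ‖c‖ = ∑' R, ‖c R‖ := by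
  have := lp.norm_eq_tsum_rpow (p := 1) (by simp) c
  simpa using this

/-- Superposition of rotates. -/
def superp {n : ℕ} (f : Sph n → ℂ) (c : L1G n) : Sph n → ℂ :=
  fun θ => ∑' R, c R * f (rotS R θ)

lemma spp_summ {n : ℕ} {f : Sph n → ℂ} {B : ℝ} (hB : ∀ x, ‖f x‖ ≤ B) (c : L1G n) (θ : Sph n) :
    Summable fun R => ‖c R * f (rotS R θ)‖ := by
  refine Summable.of_nonneg_of_le (fun _ => norm_nonneg _) (fun R => ?_)
    ((l1_summable c).mul_right B)
  rw [norm_mul]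
  exact mul_le_mul_of_nonneg_left (hB _) (norm_nonneg _)

lemma spp_bound {n : ℕ} {f : Sph n → ℂ} {B : ℝ} (hB : ∀ x, ‖f x‖ ≤ B) (c : L1G n) (θ : Sph n) :
    ‖superp f c θ‖ ≤ ‖c‖ * B := by
  unfold superp
  refine (norm_tsum_le_tsum_norm (spp_summ hB c θ)).trans ?_
  rw [l1_norm, ← tsum_mul_right]
  refine (spp_summ hB c θ).tsum_le_tsum (fun R => ?_) ((l1_summable c).mul_right B)
  rw [norm_mul]
  exact mul_le_mul_of_nonneg_left (hB _) (norm_nonneg _)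

lemma spp_add {n : ℕ} {f : Sph n → ℂ} {B : ℝ} (hB : ∀ x, ‖f x‖ ≤ B) (c d : L1G n) :
    superp f (c + d) = superp f c + superp f d := by
  ext θ
  simp only [superp, lp.coeFn_add, Pi.add_apply, add_mul]
  exact (spp_summ hB c θ).of_norm.tsum_add (spp_summ hB d θ).of_norm

lemma spp_smul {n : ℕ} {f : Sph n → ℂ} (r : ℂ) (c : L1G n) :
    superp f (r • c) = r • superp f c := by
  ext θ
  simp only [superp, lp.coeFn_smul, Pi.smul_apply, smul_eq_mul, mul_assoc]
  exact tsum_mul_left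

lemma spp_smooth {n : ℕ} {f : Sph n → ℂ} (hf : SmoothSph f) (c : L1G n) :
    SmoothSph (superp f c) := by
  obtain ⟨F, B, hF, hfF, hB⟩ := exists_ext hf
  refine ⟨fun x => ∑' R, c R • (F ∘ R) x, ?_, fun x => by simp [superp, hfF]⟩
  refine contDiff_tsum (v := fun k R => ‖c R‖ * B k) ?_ ?_ ?_
  · intro R
    exact (contDiff_const (c := c R)).mul (hF.comp R.contDiff)
  · intro k _
    exact (l1_summable c).mul_right _
  · intro k R x _
    have h1 : ContDiffAt ℝ k (F ∘ R) x :=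
      ((hF.comp R.contDiff).of_le (by exact_mod_cast le_top)).contDiffAt
    have : iteratedFDeriv ℝ k (c R • (F ∘ R)) x = c R • iteratedFDeriv ℝ k (F ∘ R) x :=
      iteratedFDeriv_const_smul_apply h1
    change ‖iteratedFDeriv ℝ k (c R • (F ∘ R)) x‖ ≤ _
    rw [this, norm_smul, R.norm_iteratedFDeriv_comp_right]
    exact mul_le_mul_of_nonneg_left (hB _ _) (norm_nonneg _)

open Classical in
lemma spp_single {n : ℕ} (f : Sph n → ℂ) (R : Euc n ≃ₗᵢ[ℝ] Euc n) :
    superp f (lp.single 1 R (1 : ℂ)) = f ∘ rotS R := by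
  ext θ
  unfold superp
  rw [tsum_eq_single R]
  · simp
  · intro R' h
    simp [h]

open Classical in
/-- Locally uniform bound in `α` and `u`, from the closed graph theorem. -/
lemma M_bound {n : ℕ} (hn : 2 ≤ n) (MF : CosineFamily n) {f : Sph n → ℂ} (hf : SmoothSph f)
    {α₀ : ℂ} (hα : α₀ ∈ domU) :
    ∃ W : Set ℂ, IsOpen W ∧ α₀ ∈ W ∧ W ⊆ domU ∧ ∃ C : ℝ, ∀ α ∈ W, ∀ u, ‖MF.M α f u‖ ≤ C := by
  obtain ⟨W, K, hWo, hWc, h2W, hαW, hK, hWK, hKU⟩ := exists_W hα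
  refine ⟨W, hWo, hαW, hWK.trans hKU, ?_⟩
  by_cases hne : Nonempty (Sph n)
  swap
  · exact ⟨0, fun α _ u => (hne ⟨u⟩).elim⟩
  obtain ⟨u₀⟩ := hne
  obtain ⟨B, hB⟩ : ∃ B, ∀ x, ‖f x‖ ≤ B := by
    obtain ⟨F, B, hF, hfF, hB⟩ := exists_ext hf
    refine ⟨B 0, fun x => ?_⟩
    have := hB 0 x
    rwa [norm_iteratedFDeriv_zero, ← hfF] at this
  have hdiff : ∀ c : L1G n, DifferentiableOn ℂ (fun α => MF.M α (superp f c) u₀) domU :=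
    fun c => MF.analytic (spp_smooth hf c) u₀
  have hbd : ∀ c : L1G n, ∃ C, ∀ α ∈ K, ‖MF.M α (superp f c) u₀‖ ≤ C := fun c =>
    hK.exists_bound_of_continuousOn ((hdiff c).continuousOn.mono hKU)
  choose C hC using hbd
  let T : L1G n →ₗ[ℂ] (BoundedContinuousFunction W ℂ) :=
    { toFun := fun c => BoundedContinuousFunction.ofNormedAddCommGroup
        (fun α : W => MF.M α (superp f c) u₀)
        (((hdiff c).continuousOn.mono (hWK.trans hKU)).domRestrict) (C c)
        (fun α => hC c α (hWK α.2))
      map_add' := by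
        intro c d
        ext α
        change MF.M α (superp f (c + d)) u₀ = MF.M α (superp f c) u₀ + MF.M α (superp f d) u₀
        rw [spp_add hB, (MF.linear α).map_add, Pi.add_apply]
      map_smul' := by
        intro r c
        ext α
        change MF.M α (superp f (r • c)) u₀ = r • MF.M α (superp f c) u₀
        rw [spp_smul, (MF.linear α).map_smul, Pi.smul_apply] }
  have hTa : ∀ c (α : W), T c α = MF.M α (superp f c) u₀ := fun c α => rfl
  have hT : Continuous T := by
    apply LinearMap.continuous_of_seq_closed_graph
    intro u x y hu hy
    let Y : ℂ → ℂ := fun α => if h : α ∈ W then y ⟨α, h⟩ else 0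
    have hYu : TendstoUniformlyOn (fun k α => MF.M α (superp f (u k)) u₀) Y Filter.atTop W := by
      rw [Metric.tendstoUniformlyOn_iff]
      intro ε hε
      filter_upwards [Metric.tendsto_nhds.1 hy ε hε] with k hk α hαW
      have := (BoundedContinuousFunction.dist_coe_le_dist (f := T (u k)) (g := y) ⟨α, hαW⟩).trans_lt hk
      rw [dist_comm]
      simpa [Y, hαW, hTa] using this
    have hYd : DifferentiableOn ℂ Y W :=
      hYu.tendstoLocallyUniformlyOn.differentiableOn
        (.of_forall fun k => (hdiff (u k)).mono (hWK.trans hKU)) hWo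
    have hEq := identW hWo hWc h2W hYd ((hdiff x).mono (hWK.trans hKU)) (by
      intro a h1 h3 haW
      refine tendsto_nhds_unique (hYu.tendsto_at haW) ?_
      obtain ⟨D, hD⟩ := cosT_bound hn u₀ h1
      rw [tendsto_iff_norm_sub_tendsto_zero]
      have hz : Filter.Tendsto (fun k => D * (‖u k - x‖ * B)) Filter.atTop (nhds 0) := by
        have := (tendsto_iff_norm_sub_tendsto_zero.1 hu)
        simpa using (this.mul_const B).const_mul D
      refine squeeze_zero (fun _ => norm_nonneg _) (fun k => ?_) hz
      have : MF.M a (superp f (u k)) u₀ - MF.M a (superp f x) u₀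
          = MF.M a (superp f (u k - x)) u₀ := by
        have h := congrArg (fun g => g (⟨a, haW⟩ : W)) (map_sub T (u k) x)
        simp only [BoundedContinuousFunction.coe_sub, Pi.sub_apply, hTa] at h
        exact h.symm
      rw [this, MF.formula (by simp; linarith) (notOdd_of_real h1 h3) (spp_smooth hf _)]
      exact hD _ _ (spp_bound hB _))
    ext α
    have := hEq α.2
    simpa [Y, hTa] using this
  let T' : L1G n →L[ℂ] (BoundedContinuousFunction W ℂ) := ⟨T, hT⟩
  refine ⟨‖T'‖, fun α hαW u => ?_⟩
  obtain ⟨R, rfl⟩ := exists_rot u₀ u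
  rw [← M_rot hn MF hf R u₀ (hKU (hWK hαW)), ← spp_single]
  have h1 := T'.le_opNorm (lp.single 1 R (1 : ℂ))
  rw [lp.norm_single (by simp)] at h1
  have h2 := (T' (lp.single 1 R (1 : ℂ))).norm_coe_le_norm ⟨α, hαW⟩
  simp only [norm_one, mul_one] at h1
  exact h2.trans h1

lemma SmoothSph.cont {n : ℕ} {f : Sph n → ℂ} (hf : SmoothSph f) : Continuous f := by
  obtain ⟨F, hF, hfF⟩ := hf
  have : f = fun x : Sph n => F x := funext hfF
  rw [this]
  exact hF.continuous.comp continuous_subtype_val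

lemma cont_int {n : ℕ} {f : Sph n → ℂ} (hf : Continuous f) : Integrable f (sphMeasure n) :=
  hf.integrable_of_hasCompactSupport (HasCompactSupport.of_compactSpace f)

/-- Holomorphy of parameter integrals. -/
lemma hol_int {n : ℕ} (G : ℂ → Sph n → ℂ) (hd : ∀ u, DifferentiableOn ℂ (fun α => G α u) domU)
    (hc : ∀ α ∈ domU, Continuous (G α))
    (hb : ∀ α₀ ∈ domU, ∃ W : Set ℂ, IsOpen W ∧ α₀ ∈ W ∧ W ⊆ domU ∧
      ∃ C : ℝ, ∀ α ∈ W, ∀ u, ‖G α u‖ ≤ C) :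
    DifferentiableOn ℂ (fun α => ∫ u, G α u ∂(sphMeasure n)) domU := by
  intro α₀ hα
  apply DifferentiableAt.differentiableWithinAt
  obtain ⟨W, hWo, hαW, hWU, C, hC⟩ := hb α₀ hα
  obtain ⟨ε, hε, hεW⟩ := Metric.isOpen_iff.1 hWo α₀ hαW
  have hda : ∀ u, ∀ α ∈ domU, HasDerivAt (fun α => G α u) (deriv (fun α => G α u) α) α :=
    fun u α h => ((hd u).differentiableAt (domU_open.mem_nhds h)).hasDerivAt
  have hsub : ∀ z ∈ Metric.ball α₀ (ε / 2), Metric.closedBall z (ε / 3) ⊆ W := by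
    intro z hz y hy
    apply hεW
    rw [Metric.mem_ball] at hz ⊢
    rw [Metric.mem_closedBall] at hy
    have := dist_triangle y z α₀
    linarith
  refine (hasDerivAt_integral_of_dominated_loc_of_deriv_le (μ := sphMeasure n) (F := G)
    (F' := fun α u => deriv (fun α => G α u) α) (bound := fun _ => C / (ε / 3))
    (Metric.ball_mem_nhds α₀ (half_pos hε)) ?_ (cont_int (hc α₀ hα)) ?_ ?_
    (integrable_const _) ?_).2.differentiableAt
  · filter_upwards [domU_open.mem_nhds hα] with α h
    exact (hc α h).aestronglyMeasurable
  · classical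
    refine aestronglyMeasurable_of_tendsto_ae (nhdsWithin α₀ {α₀}ᶜ)
      (f := fun z u => if z ∈ domU then slope (fun α => G α u) α₀ z else 0) ?_ ?_
    · intro z
      by_cases hz : z ∈ domU
      · simp only [hz, if_true, slope_def_field]
        exact (((hc z hz).sub (hc α₀ hα)).div_const _).aestronglyMeasurable
      · simp only [hz, if_false]
        exact aestronglyMeasurable_const
    · refine .of_forall fun u => ?_
      refine (hasDerivAt_iff_tendsto_slope.1 (hda u α₀ hα)).congr' ?_
      filter_upwards [nhdsWithin_le_nhds (domU_open.mem_nhds hα)] with z hz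
      simp [hz]
  · refine .of_forall fun u z hz => ?_
    apply Complex.norm_deriv_le_of_forall_mem_sphere_norm_le (by positivity)
    · apply DifferentiableOn.diffContOnCl
      refine (hd u).mono ((Metric.closure_ball_subset_closedBall.trans (hsub z hz)).trans hWU)
    · intro y hy
      exact hC y (hsub z hz (Metric.sphere_subset_closedBall hy)) u
  · refine .of_forall fun u z hz => hda u z ?_
    exact hWU (hsub z hz (Metric.mem_closedBall_self (by positivity)))

lemma duality {n : ℕ} (hn : 2 ≤ n) (MF : CosineFamily n) {f : Sph n → ℂ} (hf : SmoothSph f)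
    (k : ℕ) (w : Sph n) {α : ℂ} (hα : α ∈ domU) :
    ∫ u, MF.M α f u * sk k w u ∂(sphMeasure n) = ∫ u, f u * MF.M α (sk k w) u ∂(sphMeasure n) := by
  have hs := sk_smooth k w
  obtain ⟨Bs, hBs⟩ : ∃ B, ∀ x, ‖sk k w x‖ ≤ B := by
    obtain ⟨F, B, hF, hfF, hB⟩ := exists_ext hs
    refine ⟨B 0, fun x => ?_⟩
    have := hB 0 x
    rwa [norm_iteratedFDeriv_zero, ← hfF] at this
  obtain ⟨Bf, hBf⟩ : ∃ B, ∀ x, ‖f x‖ ≤ B := by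
    obtain ⟨F, B, hF, hfF, hB⟩ := exists_ext hf
    refine ⟨B 0, fun x => ?_⟩
    have := hB 0 x
    rwa [norm_iteratedFDeriv_zero, ← hfF] at this
  refine identU (f := fun α => ∫ u, MF.M α f u * sk k w u ∂(sphMeasure n))
    (g := fun α => ∫ u, f u * MF.M α (sk k w) u ∂(sphMeasure n)) ?_ ?_ ?_ hα
  · apply hol_int
    · exact fun u => (MF.analytic hf u).mul_const _
    · exact fun α h => (MF.smooth h hf).cont.mul hs.cont
    · intro α₀ h
      obtain ⟨W, h1, h2, h3, C, hC⟩ := M_bound hn MF hf h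
      refine ⟨W, h1, h2, h3, C * Bs, fun α hα u => ?_⟩
      rw [norm_mul]
      exact mul_le_mul (hC α hα u) (hBs u) (norm_nonneg _) ((norm_nonneg _).trans (hC α hα u))
  · apply hol_int
    · exact fun u => (MF.analytic hs u).const_mul _
    · exact fun α h => hf.cont.mul (MF.smooth h hs).cont
    · intro α₀ h
      obtain ⟨W, h1, h2, h3, C, hC⟩ := M_bound hn MF hs h
      refine ⟨W, h1, h2, h3, Bf * C, fun α hα u => ?_⟩
      rw [norm_mul]
      exact mul_le_mul (hBf u) (hC α hα u) (norm_nonneg _) ((norm_nonneg _).trans (hBf u))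
  · intro a h1 h3
    have hre : 0 < (a : ℂ).re := by simp; linarith
    have hod := notOdd_of_real h1 h3
    have e1 : ∀ u, MF.M a f u * sk k w u = (gammaM n a * ((sigmaS (n - 1) : ℝ) : ℂ)⁻¹) *
        ∫ θ, f θ * sk k w u * ((|⟪(θ : Euc n), (u : Euc n)⟫| : ℝ) : ℂ) ^ ((a : ℂ) - 1)
          ∂(sphMeasure n) := by
      intro u
      rw [MF.formula hre hod hf]
      unfold cosT
      rw [avg_eq hn, ← mul_assoc, mul_assoc, ← integral_mul_const]
      congr 2
      ext θ; ring
    have e2 : ∀ θ, f θ * MF.M a (sk k w) θ = (gammaM n a * ((sigmaS (n - 1) : ℝ) : ℂ)⁻¹) *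
        ∫ u, f θ * sk k w u * ((|⟪(θ : Euc n), (u : Euc n)⟫| : ℝ) : ℂ) ^ ((a : ℂ) - 1)
          ∂(sphMeasure n) := by
      intro θ
      rw [MF.formula hre hod hs]
      unfold cosT
      have e3 : ∀ u : Sph n, f θ * sk k w u * ((|⟪(θ : Euc n), (u : Euc n)⟫| : ℝ) : ℂ) ^ ((a : ℂ) - 1)
          = f θ * (sk k w u * ((|⟪(u : Euc n), (θ : Euc n)⟫| : ℝ) : ℂ) ^ ((a : ℂ) - 1)) := by
        intro u
        rw [real_inner_comm]; ring
      simp_rw [e3]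
      rw [avg_eq hn, integral_const_mul]
      ring
    simp_rw [e1, e2]
    rw [integral_const_mul, integral_const_mul]
    congr 1
    apply integral_integral_swap_of_hasCompactSupport
    · have hk := Complex.continuous_ofReal_cpow_const (y := (a : ℂ) - 1) (by simp; linarith)
      have hi : Continuous fun p : Sph n × Sph n => |⟪(p.2 : Euc n), (p.1 : Euc n)⟫| := by fun_prop
      exact ((hf.cont.comp continuous_snd).mul (hs.cont.comp continuous_fst)).mul (hk.comp hi)
    · exact HasCompactSupport.of_compactSpace _

lemma neg_mp {n : ℕ} (g : Sph n → ℂ) :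
    ∫ x, g (-x) ∂(sphMeasure n) = ∫ x, g x ∂(sphMeasure n) := by
  have := (rotS_mp (LinearIsometryEquiv.neg ℝ (E := Euc n))).integral_comp
    (rotS_emb (LinearIsometryEquiv.neg ℝ (E := Euc n))) g
  rw [← this]
  rfl

/-- Even continuous functions orthogonal to all even zonal monomials vanish. -/
lemma zero_of_orth {n : ℕ} {g : Sph n → ℂ} (hg : Continuous g) (he : EvenSph g)
    (h : ∀ k w, ∫ u, g u * sk k w u ∂(sphMeasure n) = 0) (w : Sph n) : g w = 0 := by
  have hall : ∀ j : ℕ, ∫ u : Sph n, g u * ((⟪(u : Euc n), (w : Euc n)⟫ ^ j : ℝ) : ℂ)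
      ∂(sphMeasure n) = 0 := by
    intro j
    rcases Nat.even_or_odd j with hj | hj
    · obtain ⟨k, rfl⟩ := hj
      rw [← two_mul]; exact h k w
    · have h1 := neg_mp (fun u : Sph n => g u * ((⟪(u : Euc n), (w : Euc n)⟫ ^ j : ℝ) : ℂ))
      have h2 : ∀ u : Sph n, g (-u) * ((⟪((-u : Sph n) : Euc n), (w : Euc n)⟫ ^ j : ℝ) : ℂ)
          = - (g u * ((⟪(u : Euc n), (w : Euc n)⟫ ^ j : ℝ) : ℂ)) := by
        intro u
        rw [he u, coe_neg_sphere, inner_neg_left, hj.neg_pow]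
        push_cast; ring
      simp_rw [h2, integral_neg] at h1
      exact self_eq_neg.1 h1.symm
  have hpow : ∀ k : ℕ, ∫ u : Sph n, ((1 + ⟪(u : Euc n), (w : Euc n)⟫) ^ k : ℝ) • g u
      ∂(sphMeasure n) = 0 := by
    intro k
    have e : ∀ u : Sph n, ((1 + ⟪(u : Euc n), (w : Euc n)⟫) ^ k : ℝ) • g u
        = ∑ j ∈ Finset.range (k + 1), (k.choose j : ℂ) *
          (g u * ((⟪(u : Euc n), (w : Euc n)⟫ ^ j : ℝ) : ℂ)) := by
      intro u
      rw [add_comm, add_pow, Complex.real_smul, Complex.ofReal_sum, Finset.sum_mul]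
      apply Finset.sum_congr rfl
      intro j _
      push_cast; simp; ring
    simp_rw [e]
    rw [integral_finsetSum]
    · apply Finset.sum_eq_zero
      intro j _
      rw [integral_const_mul, hall, mul_zero]
    · intro j _
      apply cont_int
      have : Continuous fun u : Sph n => ⟪(u : Euc n), (w : Euc n)⟫ := by fun_prop
      exact continuous_const.mul (hg.mul (Complex.continuous_ofReal.comp (this.pow j)))
  have : (sphMeasure n).IsOpenPosMeasure := by unfold sphMeasure; infer_instance
  have hww : ⟪(w : Euc n), (w : Euc n)⟫ = 1 := by
    rw [real_inner_self_eq_norm_sq, norm_eq_of_mem_sphere]; norm_num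
  have key := tendsto_setIntegral_pow_smul_of_unique_maximum_of_isCompact_of_continuousOn
    (μ := sphMeasure n) (s := Set.univ) (x₀ := w) (g := g)
    (c := fun u : Sph n => 1 + ⟪(u : Euc n), (w : Euc n)⟫) isCompact_univ
    (by
      have : Continuous fun u : Sph n => 1 + ⟪(u : Euc n), (w : Euc n)⟫ := by fun_prop
      exact this.continuousOn)
    (by
      intro y _ hy
      have h1 : ⟪(y : Euc n), (w : Euc n)⟫ < 1 := by
        rw [inner_lt_one_iff_real_of_norm_eq_one (norm_eq_of_mem_sphere y) (norm_eq_of_mem_sphere w)]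
        exact fun hh => hy (Subtype.ext hh)
      rw [hww]; linarith)
    (by
      intro x _
      have := (abs_le.1 (inner_abs_le x w)).1
      linarith)
    (by rw [hww]; norm_num) (by simp) hg.continuousOn
  simp only [Measure.restrict_univ, hpow, smul_zero] at key
  exact (tendsto_nhds_unique key tendsto_const_nhds)


/-- If `α + β = 2 - n` (`α, β ∉ {1,3,5,…}`), then `M^α M^β = I`
on `D_e(S^{n-1})`;  equivalently, `m_{j,α} m_{j,β} = 1` for all even `j`. -/
theorem cosine_transform_composition_inverse (n : ℕ) (hn : 2 ≤ n) (MF : CosineFamily n)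
    (α β : ℂ) (hα : ¬ IsPosOdd α) (hβ : ¬ IsPosOdd β) (hαβ : α + β = 2 - n) :
    (∀ f : Sph n → ℂ, SmoothSph f → EvenSph f → MF.M α (MF.M β f) = f) ∧
      ∀ j : ℕ, Even j → multM n j α * multM n j β = 1 := by
  refine ⟨fun f hf he => ?_, fun j hj => multM_inv hα hβ hαβ j hj⟩
  have hβf := MF.smooth hβ hf
  have hh := MF.smooth hα hβf
  ext w
  have hz := zero_of_orth (g := fun u => MF.M α (MF.M β f) u - f u) (hh.cont.sub hf.cont)
    (fun x => by simp only [MF.even hα hβf x, he x]) ?_ w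
  · exact sub_eq_zero.1 hz
  · intro k w
    have h1 := duality hn MF hβf k w hα
    have h2 : ∫ u, MF.M β f u * MF.M α (sk k w) u ∂(sphMeasure n)
        = ∫ u, f u * MF.M β (MF.M α (sk k w)) u ∂(sphMeasure n) := by
      rw [M_sk hn MF k w hα, M_sum]
      simp only [Finset.sum_apply, Pi.smul_apply, smul_eq_mul, Finset.mul_sum,
        mul_left_comm _ (ccoef _ _ _ _)]
      have hcs : ∀ l, Continuous (sk l w) := fun l => (sk_smooth l w).cont
      rw [integral_finsetSum, integral_finsetSum]
      · apply Finset.sum_congr rfl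
        intro l _
        rw [integral_const_mul, integral_const_mul, duality hn MF hf l w hβ]
      · exact fun l _ => cont_int (continuous_const.mul
          (hf.cont.mul (MF.smooth hβ (sk_smooth l w)).cont))
      · exact fun l _ => cont_int (continuous_const.mul (hβf.cont.mul (hcs l)))
    rw [M_M_sk hn MF k w hα hβ hαβ] at h2
    have hcs := (sk_smooth k w).cont
    simp only [sub_mul]
    have hi1 : Integrable (fun u => MF.M α (MF.M β f) u * sk k w u) (sphMeasure n) :=
      cont_int (hh.cont.mul hcs)
    have hi2 : Integrable (fun u => f u * sk k w u) (sphMeasure n) := cont_int (hf.cont.mul hcs)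
    rw [integral_sub hi1 hi2, h1, h2, sub_self]



end
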